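/- arXiv:2010.09806 — 3 statements merged into one kernel-verified Lean document; each statement's English description precedes it below -/
import Mathlib

section
/- Let G act by measure-preserving transformations on a probability space (X, μ) with Følner sequence {F_n}. For any admissible semimetric ρ ≤ 1 on X and any ε ∈ (0,1) with ℍ_ε(X, μ, ρ) > 0, one has ℍ_{2√ε}(X, μ, G^n_{av} ρ) ≤ 2|F_n| · ℍ_ε(X, μ, ρ), so in particular ℍ_{2√ε}(X, μ, G^n_{av} ρ) = O(|F_n|). -/
open MeasureTheory Filter Pointwise

section EpsEntropy

variable {α : Type*} [MeasurableSpace α]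

/-- `k` works for an `ε`-cover: `X = X₀ ∪ … ∪ X_k` with `μ X₀ < ε` and `diam_ρ X_i < ε` for `i ≥ 1`. -/
def IsEntCover (μ : Measure α) (ρ : α → α → ℝ) (ε : ℝ) (k : ℕ) : Prop :=
  ∃ A : Fin (k + 1) → Set α, (∀ i, MeasurableSet (A i)) ∧ (⋃ i, A i) = Set.univ ∧
    μ (A 0) < ENNReal.ofReal ε ∧
    ∀ i : Fin (k + 1), i ≠ 0 → ∀ x ∈ A i, ∀ y ∈ A i, ρ x y < ε

/-- The ε-entropy `ℍ_ε(X, μ, ρ) = log₂ k` for the minimal admissible `k`. -/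
noncomputable def epsEntropy (μ : Measure α) (ρ : α → α → ℝ) (ε : ℝ) : ℝ :=
  Real.logb 2 ((sInf {k : ℕ | 0 < k ∧ IsEntCover μ ρ ε k} : ℕ) : ℝ)

/-- A semimetric is admissible iff all of its `ε`-entropies are finite. -/
def Admissible (μ : Measure α) (ρ : α → α → ℝ) : Prop :=
  ∀ ε : ℝ, 0 < ε → ∃ k : ℕ, 0 < k ∧ IsEntCover μ ρ ε k

end EpsEntropy

/-- A cover indexed by an arbitrary finite type, with a separate exceptional set. -/
lemma IsEntCover.of_fintype {α ι : Type*} [MeasurableSpace α] [Fintype ι] {μ : Measure α}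
    {ρ : α → α → ℝ} {ε : ℝ} {B₀ : Set α} {B : ι → Set α} (hB₀ : MeasurableSet B₀)
    (hB : ∀ i, MeasurableSet (B i)) (hcover : ∀ x ∉ B₀, ∃ i, x ∈ B i)
    (hμ : μ B₀ < ENNReal.ofReal ε) (hdiam : ∀ i, ∀ x ∈ B i, ∀ y ∈ B i, ρ x y < ε) :
    IsEntCover μ ρ ε (Fintype.card ι) := by
  refine ⟨Fin.cons B₀ fun j => B ((Fintype.equivFin ι).symm j), ?_, ?_, ?_, ?_⟩
  · intro i
    refine Fin.cases ?_ (fun j => ?_) i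
    · simpa using hB₀
    · simpa using hB _
  · refine Set.eq_univ_of_forall fun x => Set.mem_iUnion.2 ?_
    by_cases hx : x ∈ B₀
    · exact ⟨0, by simpa using hx⟩
    · obtain ⟨i, hi⟩ := hcover x hx
      exact ⟨(Fintype.equivFin ι i).succ, by simpa using hi⟩
  · simpa using hμ
  · intro i
    refine Fin.cases (fun h => absurd rfl h) (fun j _ => ?_) i
    simpa using hdiam _

/-- If `μ A < ε`, the points sent into `A` by at least `√ε * |s|` of the measure-preserving maps
`T g`, `g ∈ s`, form a set of measure less than `√ε`. -/
lemma measure_sqrt_mul_card_le_sum_indicator_lt {α ι : Type*} [MeasurableSpace α] {μ : Measure α}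
    {T : ι → α → α} (hT : ∀ g, MeasurePreserving (T g) μ μ) {s : Finset ι} (hs : s.Nonempty)
    {A : Set α} (hA : MeasurableSet A) {ε : ℝ} (hε : 0 < ε) (hμA : μ A < ENNReal.ofReal ε) :
    μ {x | ENNReal.ofReal (√ε * s.card) ≤ ∑ g ∈ s, A.indicator 1 (T g x)} <
      ENNReal.ofReal √ε := by
  have hcard : (0 : ℝ) < s.card := by exact_mod_cast hs.card_pos
  have hsqrt : 0 < √ε := Real.sqrt_pos.2 hε
  have hmeas : ∀ g, Measurable fun x => A.indicator (1 : α → ENNReal) (T g x) := fun g =>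
    (measurable_one.indicator hA).comp (hT g).measurable
  have hint : ∫⁻ x, ∑ g ∈ s, A.indicator (1 : α → ENNReal) (T g x) ∂μ = s.card * μ A := by
    rw [lintegral_finsetSum _ fun g _ => hmeas g]
    have h : ∀ g ∈ s, ∫⁻ x, A.indicator (1 : α → ENNReal) (T g x) ∂μ = μ A := fun g _ => by
      rw [(hT g).lintegral_comp (measurable_one.indicator hA), lintegral_indicator_one hA]
    rw [Finset.sum_congr rfl h, Finset.sum_const, nsmul_eq_mul]
  have hmarkov := mul_meas_ge_le_lintegral (μ := μ)
    (Finset.measurable_sum s fun g _ => hmeas g) (ENNReal.ofReal (√ε * s.card))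
  rw [hint] at hmarkov
  have hlt : (s.card : ENNReal) * μ A < s.card * ENNReal.ofReal ε :=
    (ENNReal.mul_lt_mul_iff_right (by exact_mod_cast hs.card_pos.ne')
      (ENNReal.natCast_ne_top _)).2 hμA
  have heq : (s.card : ENNReal) * ENNReal.ofReal ε =
      ENNReal.ofReal (√ε * s.card) * ENNReal.ofReal √ε := by
    rw [← ENNReal.ofReal_natCast, ← ENNReal.ofReal_mul hcard.le,
      ← ENNReal.ofReal_mul (by positivity)]
    congr 1
    nlinarith [Real.mul_self_sqrt hε.le]
  rw [heq] at hlt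
  exact (ENNReal.mul_lt_mul_iff_right (ENNReal.ofReal_pos.2 (by positivity)).ne' ENNReal.ofReal_ne_top).1
    (hmarkov.trans_lt hlt)

/-- An `ε`-cover with `k` small sets induces a `2√ε`-cover with `(k + 1) ^ |s|` small sets for the
average of the pullbacks of the semimetric along the measure-preserving maps `T g`, `g ∈ s`. -/
lemma IsEntCover.average {α ι : Type*} [MeasurableSpace α] {μ : Measure α}
    {T : ι → α → α} (hT : ∀ g, MeasurePreserving (T g) μ μ) {s : Finset ι} (hs : s.Nonempty)
    {ρ : α → α → ℝ} (hbd : ∀ x y, ρ x y ≤ 1) {ε : ℝ} (hε0 : 0 < ε) (hε1 : ε ≤ 1) {k : ℕ}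
    (hk : IsEntCover μ ρ ε k) :
    IsEntCover μ (fun x y => (s.card : ℝ)⁻¹ * ∑ g ∈ s, ρ (T g x) (T g y)) (2 * √ε)
      ((k + 1) ^ s.card) := by
  classical
  obtain ⟨A, hA, hcover, hμ, hdiam⟩ := hk
  have hcard : (0 : ℝ) < s.card := by exact_mod_cast hs.card_pos
  have hsqrt : 0 < √ε := Real.sqrt_pos.2 hε0
  have hle : ε ≤ √ε := Real.le_sqrt_of_sq_le (by nlinarith)
  let zeros : (s → Fin (k + 1)) → ℝ := fun f => ∑ g, if f g = 0 then 1 else 0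
  let B : (s → Fin (k + 1)) → Set α := fun f =>
    {x | zeros f < √ε * s.card ∧ ∀ g : s, T g x ∈ A (f g)}
  have hmeas : ∀ g, Measurable fun x => (A 0).indicator (1 : α → ENNReal) (T g x) := fun g =>
    (measurable_one.indicator (hA 0)).comp (hT g).measurable
  have hcardι : Fintype.card (s → Fin (k + 1)) = (k + 1) ^ s.card := by simp
  rw [← hcardι]
  refine IsEntCover.of_fintype (B := B)
    (B₀ := {x | ENNReal.ofReal (√ε * s.card) ≤ ∑ g ∈ s, (A 0).indicator 1 (T g x)})
    (measurableSet_le measurable_const (Finset.measurable_sum s fun g _ => hmeas g)) ?_ ?_ ?_ ?_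
  · intro f
    exact measurableSet_setOfPred.2 (measurable_const.and
      (Measurable.forall fun g : s => measurableSet_setOfPred.1 ((hT g).measurable (hA (f g)))))
  · intro x hx
    have hf : ∀ g : s, ∃ i, T g x ∈ A i := fun g =>
      Set.mem_iUnion.1 (hcover ▸ Set.mem_univ (T g x))
    choose f hf using hf
    refine ⟨f, ?_, hf⟩
    rw [Set.mem_ofPred_eq, not_le] at hx
    have hzeros : ENNReal.ofReal (zeros f) ≤
        ∑ g ∈ s, (A 0).indicator (1 : α → ENNReal) (T g x) := by
      rw [← Finset.sum_coe_sort s,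
        ENNReal.ofReal_sum_of_nonneg fun g _ => by split_ifs <;> norm_num]
      refine Finset.sum_le_sum fun g _ => ?_
      split_ifs with h
      · simp [Set.indicator_of_mem (h ▸ hf g)]
      · simp
    exact (ENNReal.ofReal_lt_ofReal_iff (by positivity)).1 (hzeros.trans_lt hx)
  · exact (measure_sqrt_mul_card_le_sum_indicator_lt hT hs (hA 0) hε0 hμ).trans_le
      (ENNReal.ofReal_le_ofReal (by linarith))
  · rintro f x ⟨hzeros, hx⟩ y ⟨-, hy⟩
    have hsum : ∑ g ∈ s, ρ (T g x) (T g y) ≤ s.card * ε + zeros f := by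
      calc ∑ g ∈ s, ρ (T g x) (T g y) = ∑ g : s, ρ (T g x) (T g y) :=
            (Finset.sum_coe_sort s fun g => ρ (T g x) (T g y)).symm
        _ ≤ ∑ g : s, (ε + if f g = 0 then 1 else 0) := by
            refine Finset.sum_le_sum fun g _ => ?_
            split_ifs with h
            · linarith [hbd (T g x) (T g y)]
            · linarith [hdiam (f g) h _ (hx g) _ (hy g)]
        _ = s.card * ε + zeros f := by simp [Finset.sum_add_distrib, zeros]
    rw [inv_mul_lt_iff₀ hcard]
    nlinarith

/-- Any cover bounds the entropy from above. -/
lemma epsEntropy_le_logb {α : Type*} [MeasurableSpace α] {μ : Measure α} {ρ : α → α → ℝ} {ε : ℝ}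
    {k : ℕ} (hk : 0 < k) (h : IsEntCover μ ρ ε k) : epsEntropy μ ρ ε ≤ Real.logb 2 k := by
  have hmem : k ∈ {k : ℕ | 0 < k ∧ IsEntCover μ ρ ε k} := ⟨hk, h⟩
  have hpos := (Nat.sInf_mem ⟨k, hmem⟩).1
  exact Real.logb_le_logb_of_le one_lt_two (by exact_mod_cast hpos)
    (by exact_mod_cast Nat.sInf_le hmem)

/-- For a measure-preserving action and an admissible semimetric `ρ ≤ 1` with
`ℍ_ε(ρ) > 0`, `ℍ_{2√ε}(Gⁿ_av ρ) ≤ 2 |Fₙ| · ℍ_ε(ρ)` for every `n`. -/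
theorem epsEntropy_avg_le_card_mul {G X : Type*} [Group G] [DecidableEq G]
    [MeasurableSpace X] [MulAction G X]
    (μ : Measure X) [IsProbabilityMeasure μ]
    (hmp : ∀ g : G, MeasurePreserving (fun x : X => g • x) μ μ)
    (F : ℕ → Finset G) (hne : ∀ n, (F n).Nonempty)
    (hFolner : ∀ g : G,
      Tendsto (fun n => ((symmDiff (g • F n) (F n)).card : ℝ) / (F n).card) atTop (nhds 0))
    (ρ : X → X → ℝ)
    (hnonneg : ∀ x y, 0 ≤ ρ x y) (hsymm : ∀ x y, ρ x y = ρ y x)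
    (htri : ∀ x y z, ρ x z ≤ ρ x y + ρ y z) (hbd : ∀ x y, ρ x y ≤ 1)
    (hadm : Admissible μ ρ)
    (ε : ℝ) (hε0 : 0 < ε) (hε1 : ε < 1) (hpos : 0 < epsEntropy μ ρ ε) (n : ℕ) :
    epsEntropy μ
        (fun x y => ((F n).card : ℝ)⁻¹ * ∑ g ∈ F n, ρ (g • x) (g • y))
        (2 * Real.sqrt ε)
      ≤ 2 * (F n).card * epsEntropy μ ρ ε := by
  obtain ⟨hk0, hk⟩ : sInf {k : ℕ | 0 < k ∧ IsEntCover μ ρ ε k} ∈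
      {k : ℕ | 0 < k ∧ IsEntCover μ ρ ε k} := Nat.sInf_mem (hadm ε hε0)
  unfold epsEntropy at hpos
  rw [epsEntropy.eq_def μ ρ ε]
  set k := sInf {k : ℕ | 0 < k ∧ IsEntCover μ ρ ε k}
  have hk2 : 2 ≤ k := by
    by_contra! h
    have hk1 : k = 1 := by omega
    simp [hk1] at hpos
  have havg := IsEntCover.average hmp (hne n) hbd hε0 hε1.le hk
  refine (epsEntropy_le_logb (by positivity) havg).trans ?_
  have hpow : (k + 1) ^ (F n).card ≤ k ^ (2 * (F n).card) := by
    rw [pow_mul]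
    exact Nat.pow_le_pow_left (by nlinarith) _
  calc Real.logb 2 ((k + 1) ^ (F n).card : ℕ) ≤ Real.logb 2 (k ^ (2 * (F n).card) : ℕ) :=
        Real.logb_le_logb_of_le one_lt_two (by positivity) (by exact_mod_cast hpow)
    _ = 2 * (F n).card * Real.logb 2 k := by
        push_cast
        rw [Real.logb_pow]
        push_cast
        ring
end

section
/- Let G be a countable amenable group acting by measure-preserving transformations on a probability space (X, μ) with Følner sequence {F_n}, and suppose h(X, μ, G) > 0. Then there exists a finite measurable partition ξ and ε₀ > 0 such that for all ε ∈ (0, ε₀), ℍ_ε(X, μ, G^n_{av} ρ_ξ) ≳ |F_n| (i.e., there is c > 0 with ℍ_ε(X, μ, G^n_{av}ρ_ξ) ≥ c|F_n| for all n). -/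
open MeasureTheory Filter Pointwise

open scoped ENNReal

theorem tsum_pi_prod_le_one {κ : Type*} [Fintype κ] [DecidableEq κ] (u : κ → ℕ → ℝ≥0∞)
    (hu : ∀ g, ∑' j, u g j ≤ 1) : ∑' q : κ → ℕ, ∏ g, u g (q g) ≤ 1 := by
  rw [ENNReal.tsum_eq_iSup_sum]
  refine iSup_le fun s => ?_
  calc ∑ q ∈ s, ∏ g, u g (q g)
      ≤ ∑ q ∈ Fintype.piFinset fun g => s.image fun q => q g, ∏ g, u g (q g) :=
        Finset.sum_le_sum_of_subset fun q hq =>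
          Fintype.mem_piFinset.2 fun g => Finset.mem_image_of_mem _ hq
    _ = ∏ g, ∑ j ∈ s.image fun q => q g, u g j := (Finset.prod_univ_sum _ _).symm
    _ ≤ ∏ _g : κ, 1 := Finset.prod_le_prod' fun g _ => (ENNReal.sum_le_tsum _).trans (hu g)
    _ = 1 := by simp

theorem tsum_truncate_mul_le (p : ℕ → ℝ≥0∞) (hp : ∑' j, p j ≤ 1) (M : ℕ) (t : ℕ → ℝ≥0∞) :
    ∑' j, (if j < M then 1 else p j) * t (min j M) ≤ ∑ i ∈ Finset.range (M + 1), t i := by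
  rw [← Summable.sum_add_tsum_nat_add' (k := M) ENNReal.summable, Finset.sum_range_succ]
  refine add_le_add (Finset.sum_le_sum fun j hj => ?_) ?_
  · have := Finset.mem_range.1 hj
    simp [this, this.le]
  · have : ∀ j, (if j + M < M then 1 else p (j + M)) * t (min (j + M) M) = p (j + M) * t M := by
      intro j; simp
    simp_rw [this, ENNReal.tsum_mul_right]
    calc (∑' j, p (j + M)) * t M ≤ 1 * t M := by
          gcongr
          exact (ENNReal.tsum_comp_le_tsum_of_injective (add_left_injective M) p).trans hp
      _ = t M := one_mul _

theorem ae_measure_fiber_ne_zero {X ι : Type*} [MeasurableSpace X] [Countable ι] (μ : Measure X)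
    (N : X → ι) : ∀ᵐ x ∂μ, μ (N ⁻¹' {N x}) ≠ 0 := by
  have h : ∀ᵐ x ∂μ, ∀ i, μ (N ⁻¹' {i}) = 0 → N x ≠ i := by
    refine ae_all_iff.2 fun i => ?_
    by_cases hi : μ (N ⁻¹' {i}) = 0
    · have : ∀ᵐ x ∂μ, x ∉ N ⁻¹' {i} := measure_eq_zero_iff_ae_notMem.1 hi
      filter_upwards [this] with x hx _ using hx
    · exact ae_of_all _ fun x h => absurd h hi
  filter_upwards [h] with x hx h0 using hx _ h0 rfl

/-- Kraft's inequality: ideal code lengths `L` dominate the entropy of the partition into fibres. -/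
theorem neg_integral_logb_fiber_le {X ι : Type*} [MeasurableSpace X] [Countable ι]
    [MeasurableSpace ι] [MeasurableSingletonClass ι] (μ : Measure X) [IsProbabilityMeasure μ]
    {N : X → ι} (hN : Measurable N) (w : ι → ℝ≥0∞) (hw : ∑' i, w i ≤ 1) {L : X → ℝ}
    (hL : Integrable L μ) (hLw : ∀ᵐ x ∂μ, ENNReal.ofReal ((2 : ℝ) ^ (-L x)) ≤ w (N x)) :
    -∫ x, Real.logb 2 (μ (N ⁻¹' {N x})).toReal ∂μ ≤ ∫ x, L x ∂μ := by
  have hw1 : ∀ i, w i ≤ 1 := fun i => (ENNReal.le_tsum i).trans hw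
  have hpow : ∀ᵐ x ∂μ, (2 : ℝ) ^ (-L x) ≤ (w (N x)).toReal := by
    filter_upwards [hLw] with x hx
    exact (ENNReal.ofReal_le_iff_le_toReal (ne_top_of_le_ne_top ENNReal.one_ne_top (hw1 _))).1 hx
  by_cases hf : Integrable (fun x => Real.logb 2 (μ (N ⁻¹' {N x})).toReal) μ
  swap
  · rw [integral_undef hf, neg_zero]
    refine integral_nonneg_of_ae ?_
    filter_upwards [hpow] with x hx
    have h1 : (2 : ℝ) ^ (-L x) ≤ 1 :=
      hx.trans (ENNReal.toReal_mono ENNReal.one_ne_top (hw1 _))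
    by_contra h
    have h0 : 0 < -L x := by simpa using h
    exact absurd h1 (not_le.2 (Real.one_lt_rpow one_lt_two h0))
  set ψ : ι → ℝ≥0∞ := fun i => w i / μ (N ⁻¹' {i})
  have hψ : ∫⁻ x, ψ (N x) ∂μ ≤ 1 := by
    rw [← lintegral_map (measurable_of_countable ψ) hN, lintegral_countable']
    refine (ENNReal.tsum_le_tsum fun i => ?_).trans hw
    rw [Measure.map_apply hN (measurableSet_singleton i)]
    simp only [ψ]
    rw [div_eq_mul_inv, mul_assoc]
    exact mul_le_of_le_one_right' (ENNReal.inv_mul_le_one _)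
  have hψm : AEMeasurable (fun x => ψ (N x)) μ :=
    ((measurable_of_countable ψ).comp hN).aemeasurable
  have hψt : ∫⁻ x, ψ (N x) ∂μ ≠ ∞ := ne_top_of_le_ne_top ENNReal.one_ne_top hψ
  have hφ := integrable_toReal_of_lintegral_ne_top hψm hψt
  have hφ1 : ∫ x, (ψ (N x)).toReal ∂μ ≤ 1 := by
    rw [integral_toReal hψm (ae_lt_top' hψm hψt)]
    exact ENNReal.toReal_mono ENNReal.one_ne_top hψ
  have hl2 : 0 < Real.log 2 := Real.log_pos one_lt_two
  have key : ∫ x, (-Real.logb 2 (μ (N ⁻¹' {N x})).toReal - L x) ∂μ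
      ≤ ∫ x, ((ψ (N x)).toReal - 1) / Real.log 2 ∂μ := by
    refine integral_mono_ae (hf.neg.sub hL)
      ((hφ.sub (integrable_const 1)).div_const _) ?_
    filter_upwards [hpow, ae_measure_fiber_ne_zero μ N] with x hx h0
    have hp : 0 < (μ (N ⁻¹' {N x})).toReal := ENNReal.toReal_pos h0 (measure_ne_top _ _)
    have h2 : (0 : ℝ) < 2 ^ (-L x) := Real.rpow_pos_of_pos two_pos _
    have h3 := Real.log_le_sub_one_of_pos (div_pos h2 hp)
    rw [Real.log_div h2.ne' hp.ne', Real.log_rpow two_pos] at h3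
    have h4 : (2 : ℝ) ^ (-L x) / (μ (N ⁻¹' {N x})).toReal ≤ (ψ (N x)).toReal := by
      simp only [ψ, ENNReal.toReal_div]
      gcongr
    rw [le_div_iff₀ hl2, Real.logb, sub_mul, neg_mul, div_mul_cancel₀ _ hl2.ne']
    linarith
  rw [integral_sub (f := fun x => -Real.logb 2 (μ (N ⁻¹' {N x})).toReal) hf.neg hL, integral_neg,
    integral_div, integral_sub hφ (integrable_const 1)] at key
  have : (∫ x, (ψ (N x)).toReal ∂μ - ∫ _x : X, (1 : ℝ) ∂μ) / Real.log 2 ≤ 0 :=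
    div_nonpos_of_nonpos_of_nonneg (by simpa using hφ1) hl2.le
  linarith

/-- Ideal code length of the letter `j` relative to its truncation `min j M`. -/
noncomputable def tailCodeLength {X : Type*} [MeasurableSpace X] (μ : Measure X) (Q : X → ℕ)
    (M j : ℕ) : ℝ :=
  if j < M then 0 else -Real.logb 2 (μ (Q ⁻¹' {j})).toReal

theorem integrable_tailCodeLength {X : Type*} [MeasurableSpace X] {μ : Measure X} {Q : X → ℕ}
    (hQ : Measurable Q) (hint : Integrable (fun x => Real.logb 2 (μ (Q ⁻¹' {Q x})).toReal) μ)
    (M : ℕ) : Integrable (fun x => tailCodeLength μ Q M (Q x)) μ := by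
  refine hint.mono ((measurable_of_countable (tailCodeLength μ Q M)).comp hQ).aestronglyMeasurable
    (ae_of_all _ fun x => ?_)
  unfold tailCodeLength
  split_ifs <;> simp

theorem tendsto_integral_tailCodeLength {X : Type*} [MeasurableSpace X] {μ : Measure X} {Q : X → ℕ}
    (hQ : Measurable Q) (hint : Integrable (fun x => Real.logb 2 (μ (Q ⁻¹' {Q x})).toReal) μ) :
    Tendsto (fun M => ∫ x, tailCodeLength μ Q M (Q x) ∂μ) atTop (nhds 0) := by
  have := tendsto_integral_of_dominated_convergence (μ := μ)
    (F := fun M x => tailCodeLength μ Q M (Q x)) (f := fun _ => 0) _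
    (fun M => (integrable_tailCodeLength hQ hint M).aestronglyMeasurable) hint.norm
    (fun M => ae_of_all _ fun x => by unfold tailCodeLength; split_ifs <;> simp)
    (ae_of_all _ fun x => tendsto_const_nhds.congr' ?_)
  · simpa using this
  · filter_upwards [eventually_gt_atTop (Q x)] with M hM
    simp [tailCodeLength, hM]

theorem sum_ite_rpow_le_one {α β : ℝ} {M : ℕ} (h : (2 : ℝ) ^ (-α) + (M + 1) * 2 ^ (-β) ≤ 1)
    (c : ℕ) : ∑ j ∈ Finset.range (M + 1),
      ENNReal.ofReal (if j = c then (2 : ℝ) ^ (-α) else 2 ^ (-β)) ≤ 1 := by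
  have hα : (0 : ℝ) < 2 ^ (-α) := Real.rpow_pos_of_pos two_pos _
  have hβ : (0 : ℝ) < 2 ^ (-β) := Real.rpow_pos_of_pos two_pos _
  rw [← ENNReal.ofReal_sum_of_nonneg (fun j _ => by split_ifs <;> positivity),
    ENNReal.ofReal_le_one]
  calc ∑ j ∈ Finset.range (M + 1), (if j = c then (2 : ℝ) ^ (-α) else 2 ^ (-β))
      ≤ ∑ j ∈ Finset.range (M + 1), ((if j = c then (2 : ℝ) ^ (-α) else 0) + 2 ^ (-β)) :=
        Finset.sum_le_sum fun j _ => by split_ifs <;> simp [hβ.le]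
    _ ≤ (2 : ℝ) ^ (-α) + (M + 1) * 2 ^ (-β) := by
        rw [Finset.sum_add_distrib, Finset.sum_ite_eq']
        simp only [Finset.sum_const, Finset.card_range, nsmul_eq_mul, Nat.cast_add, Nat.cast_one]
        gcongr
        split_ifs <;> simp [hα.le]
    _ ≤ 1 := h

/-- The entropy of the `F`-names of `Q` is bounded by the cost of encoding a name through an index
`i x`, the Hamming error of the truncated name against the centre `c (i x)`, and the tail letters. -/
theorem neg_integral_logb_name_le {G X ι : Type*} [Group G] [DecidableEq G] [MeasurableSpace X]
    [MulAction G X] [Fintype ι] [Nonempty ι] (μ : Measure X) [IsProbabilityMeasure μ]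
    (hmp : ∀ g : G, MeasurePreserving (fun x : X => g • x) μ μ) {Q : X → ℕ} (hQ : Measurable Q)
    (hint : Integrable (fun x => Real.logb 2 (μ (Q ⁻¹' {Q x})).toReal) μ) (F : Finset G) {M : ℕ}
    {α β : ℝ} (hα : 0 ≤ α) (hβ : 0 ≤ β) (hαβ : (2 : ℝ) ^ (-α) + (M + 1) * 2 ^ (-β) ≤ 1)
    (c : ι → G → ℕ) (i : X → ι) {D : X → ℝ} (hD : Integrable D μ)
    (hdist : ∀ᵐ x ∂μ, ∑ g ∈ F, (if min (Q (g • x)) M = c (i x) g then (0 : ℝ) else 1) ≤ D x) :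
    -∫ x, Real.logb 2 (μ {y | ∀ g ∈ F, Q (g • y) = Q (g • x)}).toReal ∂μ
      ≤ Real.logb 2 (Fintype.card ι) + F.card * (α + ∫ x, tailCodeLength μ Q M (Q x) ∂μ)
        + β * ∫ x, D x ∂μ := by
  set ℓ := tailCodeLength μ Q M
  have hℓ := integrable_tailCodeLength hQ hint M
  have hℓg : ∀ g : G, Integrable (fun x => ℓ (Q (g • x))) μ := fun g =>
    (hmp g).integrable_comp_of_integrable hℓ
  have hℓi : ∀ g : G, ∫ x, ℓ (Q (g • x)) ∂μ = ∫ x, ℓ (Q x) ∂μ := fun g => by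
    have := integral_map (μ := μ) (φ := fun x : X => g • x) (f := fun x => ℓ (Q x))
      (hmp g).measurable.aemeasurable (by rw [(hmp g).map_eq]; exact hℓ.aestronglyMeasurable)
    rw [← this, (hmp g).map_eq]
  let N : X → F → ℕ := fun x g => Q ((g : G) • x)
  have hN : Measurable N := measurable_pi_lambda _ fun g => hQ.comp (hmp g).measurable
  let L : X → ℝ := fun x =>
    (Real.logb 2 (Fintype.card ι) + ∑ g ∈ F, (ℓ (Q (g • x)) + α)) + β * D x
  have hsum : Integrable (fun x => ∑ g ∈ F, (ℓ (Q (g • x)) + α)) μ :=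
    integrable_finsetSum _ fun g _ => (hℓg g).add (integrable_const α)
  have hL : Integrable L μ := ((integrable_const _).add hsum).add (hD.const_mul β)
  have hLint : ∫ x, L x ∂μ = Real.logb 2 (Fintype.card ι)
      + F.card * (α + ∫ x, ℓ (Q x) ∂μ) + β * ∫ x, D x ∂μ := by
    simp only [L]
    rw [integral_add (f := fun x => Real.logb 2 (Fintype.card ι) + ∑ g ∈ F, (ℓ (Q (g • x)) + α))
        ((integrable_const _).add hsum) (hD.const_mul β),
      integral_add (integrable_const _) hsum, integral_const_mul,
      integral_finsetSum (f := fun g x => ℓ (Q (g • x)) + α) _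
        fun g _ => (hℓg g).add (integrable_const α)]
    have : ∀ g ∈ F, ∫ x, (ℓ (Q (g • x)) + α) ∂μ = α + ∫ x, ℓ (Q x) ∂μ := fun g _ => by
      rw [integral_add (hℓg g) (integrable_const α), hℓi]
      simp [add_comm]
    rw [Finset.sum_congr rfl this]
    simp [mul_add]
  rw [← hLint]
  let p : ℕ → ℝ≥0∞ := fun j => μ (Q ⁻¹' {j})
  have hp : ∑' j, p j ≤ 1 := by
    have := tsum_measure_preimage_singleton (μ := μ) (s := Set.univ) (f := Q) Set.countable_univ
      fun j _ => hQ (measurableSet_singleton j)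
    rw [Set.preimage_univ, measure_univ, tsum_univ (f := fun j => μ (Q ⁻¹' {j}))] at this
    exact this.le
  let t : ι → G → ℕ → ℝ≥0∞ := fun k g j =>
    ENNReal.ofReal (if j = c k g then (2 : ℝ) ^ (-α) else 2 ^ (-β))
  let u : ι → F → ℕ → ℝ≥0∞ := fun k g j => (if j < M then 1 else p j) * t k g (min j M)
  have hu : ∀ k g, ∑' j, u k g j ≤ 1 := fun k g =>
    (tsum_truncate_mul_le p hp M (t k g)).trans (sum_ite_rpow_le_one hαβ _)
  let w : (F → ℕ) → ℝ≥0∞ := fun q =>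
    (Fintype.card ι : ℝ≥0∞)⁻¹ * ∑ k, ∏ g, u k g (q g)
  have hw : ∑' q, w q ≤ 1 := by
    simp only [w]
    rw [ENNReal.tsum_mul_left, Summable.tsum_finsetSum fun _ _ => ENNReal.summable]
    calc (Fintype.card ι : ℝ≥0∞)⁻¹ * ∑ k, ∑' q : F → ℕ, ∏ g, u k g (q g)
        ≤ (Fintype.card ι : ℝ≥0∞)⁻¹ * ∑ _k : ι, 1 := by
          gcongr with k
          exact tsum_pi_prod_le_one _ (hu k)
      _ ≤ 1 := by simp
  have hset : ∀ x, {y | ∀ g ∈ F, Q (g • y) = Q (g • x)} = N ⁻¹' {N x} := fun x => by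
    ext y
    simp [N, funext_iff]
  simp_rw [hset]
  refine neg_integral_logb_fiber_le μ hN w hw hL ?_
  have hpos : ∀ᵐ x ∂μ, ∀ g ∈ F, p (Q (g • x)) ≠ 0 :=
    (ae_ball_iff F.countable_toSet).2 fun g _ =>
      (hmp g).quasiMeasurePreserving.ae (ae_measure_fiber_ne_zero μ Q)
  filter_upwards [hdist, hpos] with x hx hpx
  let e : G → ℝ := fun g =>
    ℓ (Q (g • x)) + α + β * (if min (Q (g • x)) M = c (i x) g then 0 else 1)
  have hcard : (0 : ℝ) < Fintype.card ι := by exact_mod_cast Fintype.card_pos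
  have hLe : (2 : ℝ) ^ (-L x) ≤ (Fintype.card ι : ℝ)⁻¹ * ∏ g ∈ F, (2 : ℝ) ^ (-e g) := by
    rw [← Real.rpow_sum_of_pos two_pos, ← Real.rpow_logb two_pos (by norm_num) hcard,
      ← Real.rpow_neg two_pos.le, ← Real.rpow_add two_pos]
    refine Real.rpow_le_rpow_of_exponent_le one_le_two ?_
    simp only [L, e, Finset.sum_neg_distrib, Finset.sum_add_distrib, ← Finset.mul_sum]
    have := mul_le_mul_of_nonneg_left hx hβ
    linarith
  have hterm : ∀ g : F, ENNReal.ofReal ((2 : ℝ) ^ (-e g)) ≤ u (i x) g (N x g) := fun g => by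
    have hsplit : (2 : ℝ) ^ (-e g) = (2 : ℝ) ^ (-ℓ (Q ((g : G) • x))) *
        (2 : ℝ) ^ (-(α + β * (if min (Q ((g : G) • x)) M = c (i x) g then 0 else 1))) := by
      rw [← Real.rpow_add two_pos]
      congr 1
      simp only [e]
      ring
    rw [hsplit, ENNReal.ofReal_mul (by positivity)]
    refine mul_le_mul' ?_ (ENNReal.ofReal_le_ofReal ?_)
    · simp only [N, ℓ, tailCodeLength]
      split_ifs with hlt
      · simp
      · have h0 := ENNReal.toReal_pos (hpx g g.2) (measure_ne_top _ _)
        rw [neg_neg, Real.rpow_logb two_pos (by norm_num) h0,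
          ENNReal.ofReal_toReal (measure_ne_top _ _)]
    · simp only [N]
      split_ifs
      · simp
      · exact Real.rpow_le_rpow_of_exponent_le one_le_two (by linarith)
  calc ENNReal.ofReal ((2 : ℝ) ^ (-L x))
      ≤ ENNReal.ofReal ((Fintype.card ι : ℝ)⁻¹ * ∏ g ∈ F, (2 : ℝ) ^ (-e g)) :=
        ENNReal.ofReal_le_ofReal hLe
    _ = (Fintype.card ι : ℝ≥0∞)⁻¹ * ∏ g : F, ENNReal.ofReal ((2 : ℝ) ^ (-e g)) := by
        rw [ENNReal.ofReal_mul (by positivity), ENNReal.ofReal_inv_of_pos hcard,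
          ENNReal.ofReal_natCast, ENNReal.ofReal_prod_of_nonneg fun g _ => by positivity,
          Finset.prod_coe_sort F fun g => ENNReal.ofReal ((2 : ℝ) ^ (-e g))]
    _ ≤ w (N x) := by
        simp only [w]
        gcongr
        exact (Finset.prod_le_prod' fun g _ => hterm g).trans
          (Finset.single_le_sum (f := fun k => ∏ g, u k g (N x g)) (fun _ _ => zero_le)
            (Finset.mem_univ (i x)))

theorem exists_isEntCover_hamming {G X : Type*} [Group G] [MeasurableSpace X]
    [MulAction G X] (μ : Measure X) [IsProbabilityMeasure μ]
    (hmp : ∀ g : G, MeasurePreserving (fun x : X => g • x) μ μ) {m : ℕ} {P : X → Fin m}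
    (hP : Measurable P) (F : Finset G) {ε : ℝ} (hε : 0 < ε) :
    ∃ k : ℕ, 0 < k ∧ IsEntCover μ (fun x y => (F.card : ℝ)⁻¹ *
      ∑ g ∈ F, (if P (g • x) = P (g • y) then (0 : ℝ) else 1)) ε k := by
  classical
  let N : X → F → Fin m := fun x g => P ((g : G) • x)
  have hN : Measurable N := measurable_pi_lambda _ fun g => hP.comp (hmp g).measurable
  have hX : Nonempty X := μ.nonempty_of_neZero
  have : Nonempty (F → Fin m) := hX.map N
  let e := Fintype.equivFin (F → Fin m)
  refine ⟨Fintype.card (F → Fin m), Fintype.card_pos,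
    Fin.cons ∅ fun j => N ⁻¹' {e.symm j}, ?_, ?_, ?_, ?_⟩
  · refine Fin.cases ?_ fun j => ?_
    · simp
    · simpa using hN (measurableSet_singleton _)
  · refine Set.eq_univ_of_forall fun x => Set.mem_iUnion.2 ⟨(e (N x)).succ, ?_⟩
    simp
  · simpa using hε
  · refine Fin.cases (fun h => absurd rfl h) fun j _ x hx y hy => ?_
    simp only [Fin.cons_succ, Set.mem_preimage, Set.mem_singleton_iff] at hx hy
    have hxy : ∀ g ∈ F, P (g • x) = P (g • y) := fun g hg =>
      congrFun (hx.trans hy.symm) ⟨g, hg⟩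
    simpa [Finset.sum_eq_zero fun g hg => if_pos (hxy g hg)] using hε

theorem not_isEntCover_hamming_one {G X : Type*} [Group G] [MeasurableSpace X]
    [MulAction G X] (μ : Measure X) [IsProbabilityMeasure μ]
    (hmp : ∀ g : G, MeasurePreserving (fun x : X => g • x) μ μ) {m : ℕ} {P : X → Fin m}
    (hP : Measurable P) {F : Finset G} (hF : F.Nonempty) {ε η : ℝ} (hε : 0 < ε) (hε1 : ε < 1)
    (hη : ∀ c, η ≤ μ.real {x | P x ≠ c}) (hεη : 2 * ε < η) :
    ¬ IsEntCover μ (fun x y => (F.card : ℝ)⁻¹ *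
      ∑ g ∈ F, (if P (g • x) = P (g • y) then (0 : ℝ) else 1)) ε 1 := by
  rintro ⟨A, hA, hcov, hA0, hdiam⟩
  have hcard : (0 : ℝ) < F.card := by exact_mod_cast hF.card_pos
  have hcov' : ∀ x, x ∈ A 0 ∨ x ∈ A 1 := fun x => by
    obtain ⟨j, hj⟩ := Set.mem_iUnion.1 (hcov ▸ Set.mem_univ x)
    fin_cases j
    exacts [Or.inl hj, Or.inr hj]
  have hA0r : μ.real (A 0) ≤ ε := ENNReal.toReal_le_of_le_ofReal hε.le hA0.le
  obtain ⟨y, hy⟩ : (A 1).Nonempty := by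
    by_contra h
    have : A 0 = Set.univ := Set.eq_univ_of_forall fun x =>
      (hcov' x).resolve_right fun hx => h ⟨x, hx⟩
    rw [this, probReal_univ] at hA0r
    linarith
  have hB : ∀ g : G, MeasurableSet {x | P x ≠ P (g • y)} := fun g =>
    hP (measurableSet_singleton _).compl
  have hind : ∀ (g : G) (x : X), (if P (g • x) = P (g • y) then (0 : ℝ) else 1)
      = ((fun x => g • x) ⁻¹' {x | P x ≠ P (g • y)}).indicator (fun _ => (1 : ℝ)) x := by
    intro g x
    by_cases h : P (g • x) = P (g • y) <;> simp [h]
  have hintg : ∀ g : G, Integrable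
      (fun x => if P (g • x) = P (g • y) then (0 : ℝ) else 1) μ := fun g => by
    simp_rw [hind]
    exact (integrable_const 1).indicator ((hmp g).measurable (hB g))
  have hlow : η ≤ ∫ x, (F.card : ℝ)⁻¹ *
      ∑ g ∈ F, (if P (g • x) = P (g • y) then (0 : ℝ) else 1) ∂μ := by
    rw [integral_const_mul, integral_finsetSum _ fun g _ => hintg g, le_inv_mul_iff₀ hcard,
      ← nsmul_eq_mul]
    refine Finset.card_nsmul_le_sum _ _ _ fun g _ => ?_
    simp_rw [hind]
    rw [integral_indicator_const _ ((hmp g).measurable (hB g)), smul_eq_mul, mul_one,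
      measureReal_def, (hmp g).measure_preimage (hB g).nullMeasurableSet]
    exact hη _
  have hup : ∫ x, (F.card : ℝ)⁻¹ *
      ∑ g ∈ F, (if P (g • x) = P (g • y) then (0 : ℝ) else 1) ∂μ
      ≤ ∫ x, (ε + (A 0).indicator (fun _ => (1 : ℝ)) x) ∂μ := by
    refine integral_mono ((integrable_finsetSum _ fun g _ => hintg g).const_mul _)
      ((integrable_const ε).add ((integrable_const 1).indicator (hA 0))) fun x => ?_
    rcases hcov' x with hx | hx
    · have : ∑ g ∈ F, (if P (g • x) = P (g • y) then (0 : ℝ) else 1) ≤ F.card • (1 : ℝ) :=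
        Finset.sum_le_card_nsmul _ _ _ fun g _ => by split_ifs <;> norm_num
      simp only [hx, Set.indicator_of_mem]
      rw [inv_mul_le_iff₀ hcard]
      rw [nsmul_eq_mul, mul_one] at this
      nlinarith
    · have h0 : (0 : ℝ) ≤ (A 0).indicator (fun _ => (1 : ℝ)) x :=
        Set.indicator_nonneg (fun _ _ => zero_le_one) x
      have := hdiam 1 one_ne_zero x hx y hy
      simp only at this ⊢
      linarith
  rw [integral_add (integrable_const ε) ((integrable_const 1).indicator (hA 0)),
    integral_indicator_const _ (hA 0)] at hup
  simp at hup
  linarith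

theorem exists_rpow_neg_add_le_one {α : ℝ} (hα : 0 < α) (M : ℕ) :
    ∃ β : ℝ, 0 < β ∧ (2 : ℝ) ^ (-α) + (M + 1) * 2 ^ (-β) ≤ 1 := by
  have h1 : (2 : ℝ) ^ (-α) < 1 := Real.rpow_lt_one_of_one_lt_of_neg one_lt_two (by linarith)
  have h2 : Tendsto (fun β : ℝ => (2 : ℝ) ^ (-α) + (M + 1) * 2 ^ (-β)) atTop
      (nhds ((2 : ℝ) ^ (-α) + (M + 1) * 0)) :=
    (((tendsto_rpow_atBot_of_base_gt_one 2 one_lt_two).comp tendsto_neg_atTop_atBot).const_mul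
      _).const_add _
  have h3 := h2.eventually_le_const (u := 1) (by simpa using h1)
  obtain ⟨β, hβ, hβ0⟩ := (h3.and (eventually_gt_atTop 0)).exists
  exact ⟨β, hβ0, hβ⟩

theorem entropy_le_of_isEntCover {G X : Type*} [Group G] [DecidableEq G] [MeasurableSpace X]
    [MulAction G X] (μ : Measure X) [IsProbabilityMeasure μ]
    (hmp : ∀ g : G, MeasurePreserving (fun x : X => g • x) μ μ) {Q : X → ℕ} (hQ : Measurable Q)
    (hint : Integrable (fun x => Real.logb 2 (μ (Q ⁻¹' {Q x})).toReal) μ) {F : Finset G}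
    (hF : F.Nonempty) {M : ℕ} {α β : ℝ} (hα : 0 ≤ α) (hβ : 0 ≤ β)
    (hαβ : (2 : ℝ) ^ (-α) + (M + 1) * 2 ^ (-β) ≤ 1) {P : X → Fin (M + 1)}
    (hP : ∀ x, (P x : ℕ) = min (Q x) M) {ε : ℝ} (hε : 0 < ε) {k : ℕ}
    (hk : IsEntCover μ (fun x y => (F.card : ℝ)⁻¹ *
      ∑ g ∈ F, (if P (g • x) = P (g • y) then (0 : ℝ) else 1)) ε k) :
    -∫ x, Real.logb 2 (μ {y | ∀ g ∈ F, Q (g • y) = Q (g • x)}).toReal ∂μ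
      ≤ Real.logb 2 (k + 1) + F.card * (α + ∫ x, tailCodeLength μ Q M (Q x) ∂μ)
        + β * (F.card * (2 * ε)) := by
  classical
  obtain ⟨A, hA, hcov, hA0, hdiam⟩ := hk
  have hcard : (0 : ℝ) < F.card := by exact_mod_cast hF.card_pos
  have hA0r : μ.real (A 0) ≤ ε := ENNReal.toReal_le_of_le_ofReal hε.le hA0.le
  have hcov' : ∀ x, ∃ j, x ∈ A j := fun x => Set.mem_iUnion.1 (hcov ▸ Set.mem_univ x)
  choose i hi using hcov'
  have hcentre : ∀ j, ∃ c : G → ℕ, j ≠ 0 → ∀ x ∈ A j,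
      ∑ g ∈ F, (if min (Q (g • x)) M = c g then (0 : ℝ) else 1) ≤ F.card * ε := fun j => by
    rcases (A j).eq_empty_or_nonempty with h | ⟨y, hy⟩
    · exact ⟨0, by simp [h]⟩
    · refine ⟨fun g => P (g • y), fun hj x hx => ?_⟩
      have := hdiam j hj x hx y hy
      simp only [Fin.ext_iff, hP (_ • x)] at this
      exact ((inv_mul_lt_iff₀ hcard).1 this).le
  choose c hc using hcentre
  have hD1 : Integrable (fun x => ε + (A 0).indicator (fun _ => (1 : ℝ)) x) μ :=
    (integrable_const ε).add ((integrable_const 1).indicator (hA 0))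
  have h := neg_integral_logb_name_le μ hmp hQ hint F hα hβ hαβ c i
    (hD1.const_mul (F.card : ℝ)) (ae_of_all _ fun x => by
      by_cases h0 : i x = 0
      · have hx : x ∈ A 0 := h0 ▸ hi x
        have : ∑ g ∈ F, (if min (Q (g • x)) M = c (i x) g then (0 : ℝ) else 1)
            ≤ F.card • (1 : ℝ) :=
          Finset.sum_le_card_nsmul _ _ _ fun g _ => by split_ifs <;> norm_num
        rw [nsmul_eq_mul, mul_one] at this
        simp only [hx, Set.indicator_of_mem]
        nlinarith
      · refine (hc _ h0 x (hi x)).trans (mul_le_mul_of_nonneg_left ?_ hcard.le)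
        exact le_add_of_nonneg_right (Set.indicator_nonneg (fun _ _ => zero_le_one) x))
  rw [integral_const_mul, integral_add (integrable_const ε)
    ((integrable_const 1).indicator (hA 0)), integral_indicator_const _ (hA 0)] at h
  simp only [Fintype.card_fin, Nat.cast_add, Nat.cast_one, integral_const, probReal_univ,
    smul_eq_mul, one_mul, mul_one] at h
  have : β * (F.card * (ε + μ.real (A 0))) ≤ β * (F.card * (2 * ε)) := by
    gcongr
    linarith
  linarith

theorem not_ae_const_of_lt_entropy {G X : Type*} [Group G] [DecidableEq G] [MeasurableSpace X]
    [MulAction G X] (μ : Measure X) [IsProbabilityMeasure μ]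
    (hmp : ∀ g : G, MeasurePreserving (fun x : X => g • x) μ μ) {Q : X → ℕ} (hQ : Measurable Q)
    (hint : Integrable (fun x => Real.logb 2 (μ (Q ⁻¹' {Q x})).toReal) μ) {F : Finset G} {M : ℕ}
    {α β : ℝ} (hα : 0 ≤ α) (hβ : 0 ≤ β) (hαβ : (2 : ℝ) ^ (-α) + (M + 1) * 2 ^ (-β) ≤ 1)
    (hent : F.card * (α + ∫ x, tailCodeLength μ Q M (Q x) ∂μ)
      < -∫ x, Real.logb 2 (μ {y | ∀ g ∈ F, Q (g • y) = Q (g • x)}).toReal ∂μ) (c : ℕ) :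
    ¬ ∀ᵐ x ∂μ, min (Q x) M = c := by
  intro hc
  have hae : ∀ᵐ x ∂μ, ∀ g ∈ F, min (Q (g • x)) M = c :=
    (ae_ball_iff F.countable_toSet).2 fun g _ => (hmp g).quasiMeasurePreserving.ae hc
  have h := neg_integral_logb_name_le μ hmp hQ hint F hα hβ hαβ (fun _ : Unit => fun _ => c)
    (fun _ => ()) (integrable_const (0 : ℝ)) (by
      filter_upwards [hae] with x hx
      rw [Finset.sum_eq_zero fun g hg => if_pos (hx g hg)])
  simp at h
  linarith

/-- Theorem 3(1): if the amenable measure entropy is positive (some finite-entropy partition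
has positive normalized entropy limit), then there are a finite measurable partition `ξ`
and `ε₀ > 0` such that for all `ε ∈ (0, ε₀)`, `ℍ_ε(X, μ, Gⁿ_av ρ_ξ) ≳ |Fₙ|`. -/
theorem epsEntropy_ge_card_of_pos_entropy {G X : Type*} [Group G] [Countable G] [DecidableEq G]
    [MeasurableSpace X] [MulAction G X]
    (μ : Measure X) [IsProbabilityMeasure μ]
    (hmp : ∀ g : G, MeasurePreserving (fun x : X => g • x) μ μ)
    (F : ℕ → Finset G) (hne : ∀ n, (F n).Nonempty)
    (hFolner : ∀ g : G,
      Tendsto (fun n => ((symmDiff (g • F n) (F n)).card : ℝ) / (F n).card) atTop (nhds 0))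
    -- positive amenable measure entropy:
    (hpos : ∃ (Q : X → ℕ) (a : ℝ), Measurable Q ∧
      Integrable (fun x => Real.logb 2 (μ (Q ⁻¹' {Q x})).toReal) μ ∧ 0 < a ∧
      Tendsto (fun n =>
          (-∫ x, Real.logb 2 (μ {y | ∀ g ∈ F n, Q (g • y) = Q (g • x)}).toReal ∂μ)
            / (F n).card) atTop (nhds a)) :
    ∃ (m : ℕ) (P : X → Fin m), Measurable P ∧ ∃ ε₀ > (0 : ℝ), ∀ ε : ℝ, 0 < ε → ε < ε₀ →
      ∃ c > (0 : ℝ), ∀ n,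
        c * (F n).card ≤
          epsEntropy μ
            (fun x y => ((F n).card : ℝ)⁻¹ *
              ∑ g ∈ F n, (if P (g • x) = P (g • y) then (0 : ℝ) else 1)) ε := by
  obtain ⟨Q, a, hQ, hint, ha, hlim⟩ := hpos
  have hα : 0 < a / 8 := by positivity
  obtain ⟨M, hM⟩ := ((tendsto_integral_tailCodeLength hQ hint).eventually_lt_const hα).exists
  obtain ⟨β, hβ, hαβ⟩ := exists_rpow_neg_add_le_one hα M
  have hcard : ∀ n, (0 : ℝ) < (F n).card := fun n => by exact_mod_cast (hne n).card_pos
  obtain ⟨n₀, hn₀⟩ := eventually_atTop.1 (hlim.eventually_const_lt (half_lt_self ha))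
  have hent : ∀ n ≥ n₀, a / 2 * (F n).card <
      -∫ x, Real.logb 2 (μ {y | ∀ g ∈ F n, Q (g • y) = Q (g • x)}).toReal ∂μ := fun n hn =>
    (lt_div_iff₀ (hcard n)).1 (hn₀ n hn)
  let P : X → Fin (M + 1) := fun x => ⟨min (Q x) M, by omega⟩
  have hP : Measurable P :=
    (measurable_of_countable fun j : ℕ => (⟨min j M, by omega⟩ : Fin (M + 1))).comp hQ
  have hpart : ∀ c, 0 < μ.real {x | P x ≠ c} := fun c => by
    refine ENNReal.toReal_pos (fun h0 => ?_) (measure_ne_top _ _)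
    refine not_ae_const_of_lt_entropy μ hmp hQ hint (F := F n₀) hα.le hβ.le hαβ ?_ (c : ℕ) ?_
    · refine lt_trans ?_ (hent n₀ le_rfl)
      nlinarith [hcard n₀]
    · have : ∀ᵐ x ∂μ, P x = c := by simpa [ae_iff] using h0
      filter_upwards [this] with x hx
      exact congrArg Fin.val hx
  obtain ⟨c₀, hc₀⟩ := Finite.exists_min fun c => μ.real {x | P x ≠ c}
  set η := μ.real {x | P x ≠ c₀}
  have hη : 0 < η := hpart c₀
  refine ⟨M + 1, P, hP, min 1 (min (η / 2) (a / (16 * β))), by positivity, fun ε hε hε₀ => ?_⟩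
  simp only [lt_min_iff] at hε₀
  obtain ⟨hε1, hεη, hεβ⟩ := hε₀
  rw [lt_div_iff₀ (by positivity)] at hεβ
  obtain ⟨S, hS, hSle⟩ : ∃ S : ℝ, 0 < S ∧ ∀ n < n₀, ((F n).card : ℝ) ≤ S :=
    ⟨1 + ∑ n ∈ Finset.range n₀, ((F n).card : ℝ),
      add_pos_of_pos_of_nonneg one_pos (Finset.sum_nonneg fun _ _ => Nat.cast_nonneg _),
      fun n hn => (Finset.single_le_sum (f := fun n => ((F n).card : ℝ))
        (fun _ _ => Nat.cast_nonneg _) (Finset.mem_range.2 hn)).trans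
          (le_add_of_nonneg_left zero_le_one)⟩
  refine ⟨min (a / 16) S⁻¹, lt_min (by positivity) (inv_pos.2 hS), fun n => ?_⟩
  unfold epsEntropy
  set k := sInf {k : ℕ | 0 < k ∧ IsEntCover μ (fun x y => ((F n).card : ℝ)⁻¹ *
    ∑ g ∈ F n, (if P (g • x) = P (g • y) then (0 : ℝ) else 1)) ε k}
  obtain ⟨hk0, hk⟩ : 0 < k ∧ IsEntCover μ (fun x y => ((F n).card : ℝ)⁻¹ *
      ∑ g ∈ F n, (if P (g • x) = P (g • y) then (0 : ℝ) else 1)) ε k :=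
    Nat.sInf_mem (exists_isEntCover_hamming μ hmp hP (F n) hε)
  have hk1 : k ≠ 1 := fun h => by
    rw [h] at hk
    exact not_isEntCover_hamming_one μ hmp hP (hne n) hε hε1 hc₀ (by linarith) hk
  have hk2 : (2 : ℝ) ≤ k := by exact_mod_cast (show 2 ≤ k by omega)
  rcases lt_or_ge n n₀ with hn | hn
  · have hle := hSle n hn
    calc min (a / 16) S⁻¹ * (F n).card ≤ S⁻¹ * S := by
          gcongr
          exact min_le_right _ _
      _ = Real.logb 2 2 := by rw [inv_mul_cancel₀ hS.ne', Real.logb_self_eq_one one_lt_two]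
      _ ≤ Real.logb 2 k := Real.logb_le_logb_of_le one_lt_two two_pos hk2
  · have h1 := entropy_le_of_isEntCover μ hmp hQ hint (hne n) hα.le hβ.le hαβ (P := P)
      (fun _ => rfl) hε hk
    have h2 := hent n hn
    have h3 : Real.logb 2 ((k : ℝ) + 1) ≤ 2 * Real.logb 2 k := by
      rw [← Nat.cast_two, ← Real.logb_pow]
      exact Real.logb_le_logb_of_le (by norm_num) (by positivity) (by nlinarith)
    have h4 := mul_le_mul_of_nonneg_left hM.le (hcard n).le
    have h5 := mul_le_mul_of_nonneg_left hεβ.le (hcard n).le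
    calc min (a / 16) S⁻¹ * (F n).card ≤ a / 16 * (F n).card := by
          gcongr
          exact min_le_left _ _
      _ ≤ Real.logb 2 k := by nlinarith
end

section
/- Fix ε ∈ (0, 1/10) and φ > 1. Let (X_i, μ_i, ρ_i), i = 1,...,k, be probability spaces with admissible semimetrics, and s_i > 0 weights with s_i/φ < ℍ_{4ε}(X_i, μ_i, ρ_i) < s_i. Define the weighted average semimetric on the product X = ∏ X_i with product measure μ: ρ(x, y) = (Σ_i s_i)^{-1} Σ_i s_i ρ_i(x_i, y_i). Then ℍ_{ε⁴}(X, μ, ρ) ≥ (ε³/φ) Σ_{i=1}^k ℍ_{4ε}(X_i, μ_i, ρ_i) − k − 1. -/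
open MeasureTheory Filter Pointwise

theorem isEntCover_card {α ι : Type*} [MeasurableSpace α] [Fintype ι] {μ : Measure α}
    {ρ : α → α → ℝ} {ε : ℝ} (C : Set α) (B : ι → Set α) (hC : MeasurableSet C)
    (hB : ∀ i, MeasurableSet (B i)) (hcover : ∀ x, x ∈ C ∨ ∃ i, x ∈ B i)
    (hμC : μ C < ENNReal.ofReal ε) (hdiam : ∀ i, ∀ x ∈ B i, ∀ y ∈ B i, ρ x y < ε) :
    IsEntCover μ ρ ε (Fintype.card ι) := by
  let e := Fintype.equivFin ι
  refine ⟨Fin.cons C fun j => B (e.symm j), ?_, ?_, by simpa using hμC, ?_⟩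
  · intro i
    cases i using Fin.cases with
    | zero => simpa using hC
    | succ j => simpa using hB _
  · refine Set.eq_univ_of_forall fun x => Set.mem_iUnion.2 ?_
    rcases hcover x with hx | ⟨i, hx⟩
    · exact ⟨0, by simpa using hx⟩
    · exact ⟨(e i).succ, by simpa using hx⟩
  · intro i hi
    cases i using Fin.cases with
    | zero => exact absurd rfl hi
    | succ j => simpa using hdiam _

/-- Greedy selection: after choosing `n` members of a finite family, what every member adds to
their union has at most `1 / n` of the measure of the union. -/
theorem exists_greedy_union {α ι : Type*} [MeasurableSpace α] [Finite ι] [Nonempty ι]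
    (μ : Measure α) [IsFiniteMeasure μ] (F : ι → Set α) (hF : ∀ i, MeasurableSet (F i)) (n : ℕ) :
    ∃ c : Fin n → ι, ∀ i, n * μ.real (F i \ ⋃ j, F (c j)) ≤ μ.real (⋃ j, F (c j)) := by
  induction n with
  | zero => exact ⟨Fin.elim0, by simp⟩
  | succ n ih =>
    obtain ⟨c, hc⟩ := ih
    set U := ⋃ j, F (c j) with hU
    obtain ⟨b, hb⟩ := Finite.exists_max fun i => μ.real (F i \ U)
    refine ⟨Fin.cons b c, fun i => ?_⟩
    have hunion : (⋃ j, F ((Fin.cons b c : Fin (n + 1) → ι) j)) = U ∪ (F b \ U) := by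
      ext x
      simp [hU, Fin.exists_fin_succ]
      tauto
    have hUm : MeasurableSet U := MeasurableSet.iUnion fun j => hF _
    rw [hunion, measureReal_union Set.disjoint_sdiff_right ((hF b).diff hUm)]
    have hmono : μ.real (F i \ (U ∪ (F b \ U))) ≤ μ.real (F i \ U) :=
      measureReal_mono (Set.sdiff_subset_sdiff_right Set.subset_union_left)
    have hn : (0 : ℝ) ≤ n := n.cast_nonneg
    have := hc i
    have := hb i
    push_cast
    nlinarith

/-- If `n` sets of diameter less than `4 * ε` do not suffice for a cover, there is a set of
measure at least `3 * ε` in which every `ε`-ball has measure at most `1 / n`. -/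
theorem exists_measurableSet_small_balls {α : Type*} [MeasurableSpace α] (μ : Measure α)
    [IsProbabilityMeasure μ] (ρ : α → α → ℝ) (hsymm : ∀ x y, ρ x y = ρ y x)
    (htri : ∀ x y z, ρ x z ≤ ρ x y + ρ y z) {ε : ℝ} (hε : 0 < ε) (hadm : Admissible μ ρ)
    {n : ℕ} (hnot : ¬ IsEntCover μ ρ (4 * ε) n) :
    ∃ Y, MeasurableSet Y ∧ 3 * ε ≤ μ.real Y ∧ ∀ a, ∃ D, MeasurableSet D ∧
      (∀ x ∈ Y, ρ x a < ε → x ∈ D) ∧ n * μ.real D ≤ 1 := by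
  obtain ⟨m, -, A, hAm, hAcover, hA0, hAdiam⟩ := hadm ε hε
  let T : Set (Fin (m + 1)) → Set α := fun t => ⋃ j ∈ t, A j
  let ι := {t : Set (Fin (m + 1)) // ∀ x ∈ T t, ∀ y ∈ T t, ρ x y < 4 * ε}
  have hTm : ∀ t, MeasurableSet (T t) := fun t =>
    MeasurableSet.biUnion t.to_countable fun j _ => hAm j
  have : Nonempty ι := ⟨⟨∅, by simp [T]⟩⟩
  obtain ⟨c, hc⟩ := exists_greedy_union μ (fun t : ι => T t) (fun t => hTm t) n
  set U := ⋃ j, T (c j) with hU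
  have hUm : MeasurableSet U := MeasurableSet.iUnion fun j => hTm _
  have hUc : 4 * ε ≤ μ.real Uᶜ := by
    by_contra! h
    refine hnot ?_
    have := isEntCover_card (μ := μ) (ρ := ρ) (ε := 4 * ε) Uᶜ (fun j => T (c j)) hUm.compl
      (fun j => hTm _) (fun x => ?_) ?_ (fun j => (c j).2)
    · simpa using this
    · by_cases hx : x ∈ U
      · exact Or.inr (by simpa [hU] using hx)
      · exact Or.inl hx
    · rw [← ofReal_measureReal]
      exact (ENNReal.ofReal_lt_ofReal_iff (by positivity)).2 h
  have hA0' : μ.real (A 0) ≤ ε := by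
    have := ENNReal.toReal_mono ENNReal.ofReal_ne_top hA0.le
    rwa [ENNReal.toReal_ofReal hε.le] at this
  refine ⟨Uᶜ \ A 0, hUm.compl.diff (hAm 0), ?_, fun a => ?_⟩
  · have := measureReal_mono (μ := μ) (s₁ := Uᶜ) (s₂ := (Uᶜ \ A 0) ∪ A 0)
      (by simp)
    have := measureReal_union_le (μ := μ) (Uᶜ \ A 0) (A 0)
    linarith
  · let t : Set (Fin (m + 1)) := {j | j ≠ 0 ∧ ∃ z ∈ A j, ρ z a < ε}
    have hnear : ∀ x ∈ T t, ρ x a < 2 * ε := by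
      intro x hx
      simp only [T, Set.mem_iUnion] at hx
      obtain ⟨j, ⟨hj, z, hz, hza⟩, hx⟩ := hx
      linarith [htri x z a, hAdiam j hj x hx z hz]
    have ht : ∀ x ∈ T t, ∀ y ∈ T t, ρ x y < 4 * ε := by
      intro x hx y hy
      linarith [htri x a y, hnear x hx, hnear y hy, hsymm a y]
    refine ⟨T t \ U, (hTm t).diff hUm, ?_, ?_⟩
    · rintro x ⟨hxU, hx0⟩ hxa
      refine ⟨?_, hxU⟩
      obtain ⟨j, hj⟩ := Set.mem_iUnion.1 (hAcover ▸ Set.mem_univ x)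
      refine Set.mem_iUnion₂.2 ⟨j, ⟨?_, x, hj, hxa⟩, hj⟩
      rintro rfl
      exact hx0 hj
    · exact (hc ⟨t, ht⟩).trans measureReal_le_one

theorem Admissible.pi {ι : Type*} [Fintype ι] {X : ι → Type*} [∀ i, MeasurableSpace (X i)]
    {μ : ∀ i, Measure (X i)} [∀ i, IsProbabilityMeasure (μ i)] {ρ : ∀ i, X i → X i → ℝ}
    (hadm : ∀ i, Admissible (μ i) (ρ i)) {s : ι → ℝ} (hs : ∀ i, 0 < s i) :
    Admissible (Measure.pi μ) fun x y => (∑ i, s i)⁻¹ * ∑ i, s i * ρ i (x i) (y i) := by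
  classical
  intro δ hδ
  have hcard : (0 : ℝ) < Fintype.card ι + 1 := by positivity
  set δ' := δ / (Fintype.card ι + 1) with hδ'
  have hδ'0 : 0 < δ' := by positivity
  have hδ'le : δ' ≤ δ := div_le_self hδ.le (by simp)
  choose n hn A hAm hAcover hA0 hAdiam using fun i => hadm i δ' hδ'0
  have : ∀ i, Nonempty (Fin (n i)) := fun i => ⟨⟨0, hn i⟩⟩
  refine ⟨Fintype.card (∀ i, Fin (n i)), Fintype.card_pos, ?_⟩
  refine isEntCover_card (⋃ i, (fun x : ∀ i, X i => x i) ⁻¹' A i 0)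
    (fun g => Set.univ.pi fun i => A i (g i).succ)
    (MeasurableSet.iUnion fun i => measurable_pi_apply i (hAm i 0))
    (fun g => MeasurableSet.univ_pi fun i => hAm i _) ?_ ?_ ?_
  · intro x
    by_cases hx : ∃ i, x i ∈ A i 0
    · exact Or.inl (by simpa using hx)
    · push Not at hx
      have : ∀ i, ∃ j : Fin (n i), x i ∈ A i j.succ := by
        intro i
        obtain ⟨j, hj⟩ := Set.mem_iUnion.1 (hAcover i ▸ Set.mem_univ (x i))
        cases j using Fin.cases with
        | zero => exact absurd hj (hx i)
        | succ j => exact ⟨j, hj⟩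
      choose g hg using this
      exact Or.inr ⟨g, fun i _ => hg i⟩
  · calc Measure.pi μ (⋃ i, (fun x : ∀ i, X i => x i) ⁻¹' A i 0)
        ≤ ∑ i, Measure.pi μ ((fun x : ∀ i, X i => x i) ⁻¹' A i 0) := measure_iUnion_fintype_le _ _
      _ = ∑ i, μ i (A i 0) := Finset.sum_congr rfl fun i _ =>
          (measurePreserving_eval μ i).measure_preimage (hAm i 0).nullMeasurableSet
      _ ≤ ∑ _i : ι, ENNReal.ofReal δ' := Finset.sum_le_sum fun i _ => (hA0 i).le
      _ = ENNReal.ofReal (∑ _i : ι, δ') := (ENNReal.ofReal_sum_of_nonneg fun _ _ => hδ'0.le).symm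
      _ < ENNReal.ofReal δ := by
          refine (ENNReal.ofReal_lt_ofReal_iff hδ).2 ?_
          rw [Finset.sum_const, nsmul_eq_mul, Finset.card_univ, hδ', mul_div_assoc',
            div_lt_iff₀ hcard]
          nlinarith
  · intro g x hx y hy
    rcases isEmpty_or_nonempty ι with h | h
    · simpa using hδ
    have hS : 0 < ∑ i, s i := Finset.sum_pos (fun i _ => hs i) Finset.univ_nonempty
    rw [inv_mul_lt_iff₀ hS, Finset.sum_mul]
    refine Finset.sum_lt_sum_of_nonempty Finset.univ_nonempty fun i _ => ?_
    exact mul_lt_mul_of_pos_left ((hAdiam i _ (Fin.succ_ne_zero _) _ (hx i trivial) _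
      (hy i trivial)).trans_le hδ'le) (hs i)

/-- If the coordinate sets `Y i` have measure at least `q`, then the indices `i` with `x i ∈ Y i`
have total weight at least `r * ∑ i, s i` with probability at least `q - r`. -/
theorem sub_le_measureReal_weight {ι : Type*} [Fintype ι] {X : ι → Type*}
    [∀ i, MeasurableSpace (X i)] (μ : ∀ i, Measure (X i)) [∀ i, IsProbabilityMeasure (μ i)]
    {s : ι → ℝ} (hs : ∀ i, 0 ≤ s i) (hS : 0 < ∑ i, s i) {Y : ∀ i, Set (X i)}
    (hY : ∀ i, MeasurableSet (Y i)) {q r : ℝ} (hr : 0 ≤ r) (hq : ∀ i, q ≤ (μ i).real (Y i)) :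
    q - r ≤ (Measure.pi μ).real
      {x | r * ∑ i, s i ≤ ∑ i, (Y i).indicator (fun _ => s i) (x i)} := by
  set S := ∑ i, s i
  set w : (∀ i, X i) → ℝ := fun x => ∑ i, (Y i).indicator (fun _ => s i) (x i) with hw
  set G := {x | r * S ≤ w x}
  have hint : ∀ i, Integrable (fun x : ∀ i, X i => (Y i).indicator (fun _ => s i) (x i))
      (Measure.pi μ) := fun i =>
    integrable_comp_eval (f := (Y i).indicator fun _ => s i)
      ((integrable_const (s i)).indicator (hY i))
  have hwm : Measurable w := Finset.measurable_sum _ fun i _ =>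
    (measurable_const.indicator (hY i)).comp (measurable_pi_apply i)
  have hGm : MeasurableSet G := measurableSet_le measurable_const hwm
  have hmean : q * S ≤ ∫ x, w x ∂Measure.pi μ := by
    rw [hw, integral_finsetSum _ fun i _ => hint i, Finset.mul_sum]
    refine Finset.sum_le_sum fun i _ => ?_
    rw [integral_comp_eval (f := (Y i).indicator fun _ => s i)
      (measurable_const.indicator (hY i)).aestronglyMeasurable,
      integral_indicator_const _ (hY i), smul_eq_mul]
    exact mul_le_mul_of_nonneg_right (hq i) (hs i)
  have hupper : ∫ x, w x ∂Measure.pi μ ≤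
      ∫ x, (r * S + G.indicator (fun _ => S) x) ∂Measure.pi μ := by
    refine integral_mono (integrable_finsetSum _ fun i _ => hint i)
      ((integrable_const _).add ((integrable_const S).indicator hGm)) fun x => ?_
    by_cases hx : x ∈ G
    · have : w x ≤ S := Finset.sum_le_sum fun i _ =>
        Set.indicator_le_self' (f := fun _ => s i) (fun _ _ => hs i) (x i)
      simp only [Set.indicator_of_mem hx]
      nlinarith
    · simp only [Set.indicator_of_notMem hx, add_zero]
      exact (not_le.1 hx).le
  rw [integral_add (integrable_const _) ((integrable_const S).indicator hGm),
    integral_indicator_const _ hGm] at hupper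
  simp only [integral_const, probReal_univ, smul_eq_mul, one_mul] at hupper
  refine le_of_mul_le_mul_right ?_ hS
  linarith

theorem mul_measureReal_prod_le_two_pow {ι : Type*} [Fintype ι] {X : ι → Type*}
    [∀ i, MeasurableSpace (X i)] (μ : ∀ i, Measure (X i)) [∀ i, IsProbabilityMeasure (μ i)]
    {c : ι → ℝ} (hc : ∀ i, 0 ≤ c i) {D : ∀ i, Set (X i)} (hD : ∀ i, MeasurableSet (D i))
    (hcD : ∀ i, c i * (μ i).real (D i) ≤ 1) (K : ℝ) :
    K * (Measure.pi μ).real {x | K ≤ ∏ i, (1 + (D i).indicator (fun _ => c i) (x i))}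
      ≤ 2 ^ Fintype.card ι := by
  have hnn : ∀ i x, 0 ≤ 1 + (D i).indicator (fun _ => c i) x := fun i x =>
    add_nonneg zero_le_one (Set.indicator_nonneg (fun _ _ => hc i) x)
  have hint : ∀ i, Integrable ((D i).indicator fun _ => c i) (μ i) := fun i =>
    (integrable_const (c i)).indicator (hD i)
  refine (mul_meas_ge_le_integral_of_nonneg (ae_of_all _ fun x =>
    Finset.prod_nonneg fun i _ => hnn i (x i))
    (Integrable.fintype_prod_dep (f := fun i x => 1 + (D i).indicator (fun _ => c i) x)
      fun i => (integrable_const 1).add (hint i)) K).trans ?_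
  rw [integral_fintype_prod_eq_prod fun i x => 1 + (D i).indicator (fun _ => c i) x,
    ← Finset.card_univ, ← Finset.prod_const]
  refine Finset.prod_le_prod (fun i _ => integral_nonneg (hnn i)) fun i _ => ?_
  rw [integral_add (integrable_const 1) (hint i), integral_indicator_const _ (hD i)]
  simp only [integral_const, probReal_univ, smul_eq_mul, one_mul]
  linarith [hcD i, mul_comm (c i) ((μ i).real (D i))]

theorem epsEntropy_nonneg {α : Type*} [MeasurableSpace α] (μ : Measure α) (ρ : α → α → ℝ)
    (ε : ℝ) : 0 ≤ epsEntropy μ ρ ε := by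
  unfold epsEntropy
  rcases Nat.eq_zero_or_pos (sInf {k : ℕ | 0 < k ∧ IsEntCover μ ρ ε k}) with h | h
  · simp [h]
  · exact Real.logb_nonneg one_lt_two (by exact_mod_cast h)

/-- Positive entropy means that the minimal cover has `n + 1 ≥ 2` pieces. -/
theorem exists_epsEntropy_eq_logb {α : Type*} [MeasurableSpace α] {μ : Measure α}
    {ρ : α → α → ℝ} {ε : ℝ} (h : 0 < epsEntropy μ ρ ε) :
    ∃ n : ℕ, epsEntropy μ ρ ε = Real.logb 2 (1 + n) ∧ ¬ IsEntCover μ ρ ε n := by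
  unfold epsEntropy at h ⊢
  set N := sInf {k : ℕ | 0 < k ∧ IsEntCover μ ρ ε k} with hN
  have hN2 : 2 ≤ N := by
    by_contra! hlt
    interval_cases N <;> simp at h
  refine ⟨N - 1, ?_, fun hcov => ?_⟩
  · rw [Nat.cast_sub (by omega)]
    norm_num
  · have := Nat.sInf_le (s := {k : ℕ | 0 < k ∧ IsEntCover μ ρ ε k}) ⟨by omega, hcov⟩
    omega

theorem le_epsEntropy {α : Type*} [MeasurableSpace α] {μ : Measure α} {ρ : α → α → ℝ} {ε b : ℝ}
    (hε : 0 < ε) (hadm : Admissible μ ρ)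
    (h : ∀ N : ℕ, IsEntCover μ ρ ε N → (2 : ℝ) ^ b ≤ N) : b ≤ epsEntropy μ ρ ε := by
  obtain ⟨hpos, hcov⟩ := Nat.sInf_mem (hadm ε hε)
  exact (Real.le_logb_iff_rpow_le one_lt_two (by exact_mod_cast hpos)).2 (h _ hcov)

theorem one_le_two_rpow_mul {ε T : ℝ} (hε0 : 0 < ε) (hε1 : ε < 1 / 10) (hT : 1 ≤ ε ^ 3 * T) :
    1 ≤ (2 : ℝ) ^ ((ε - 2 * ε ^ 3) * T) * (2 * ε) := by
  set t := (ε - 2 * ε ^ 3) * T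
  have hε2 : ε ^ 2 < 1 / 100 := by nlinarith
  have ht : 1 ≤ t * ε := by
    have hTpos : 0 < T := by
      by_contra! h
      nlinarith [pow_pos hε0 3]
    have : ε ^ 3 ≤ (ε - 2 * ε ^ 3) * ε := by nlinarith [pow_pos hε0 2]
    nlinarith
  have ht0 : 0 < t := pos_of_mul_pos_left (by linarith) hε0.le
  have hexp : t / 2 ≤ (2 : ℝ) ^ t := by
    rw [Real.rpow_def_of_pos two_pos]
    nlinarith [Real.add_one_le_exp (Real.log 2 * t), Real.log_two_gt_d9]
  nlinarith

/-- Lemma 7: for admissible semimetric triples `(Xᵢ, μᵢ, ρᵢ)` and weights `sᵢ` with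
`sᵢ/φ < ℍ_{4ε}(Xᵢ, μᵢ, ρᵢ) < sᵢ` (`0 < ε < 1/10`, `φ > 1`), the weighted average
semimetric `ρ(x,y) = (Σ sᵢ)⁻¹ Σ sᵢ ρᵢ(xᵢ, yᵢ)` on the product space satisfies
`ℍ_{ε⁴}(X, μ, ρ) ≥ (ε³/φ) Σ ℍ_{4ε}(Xᵢ, μᵢ, ρᵢ) − k − 1`. -/
theorem epsEntropy_product_lower_bound {k : ℕ} (X : Fin k → Type*)
    [∀ i, MeasurableSpace (X i)]
    (μ : ∀ i, Measure (X i)) [∀ i, IsProbabilityMeasure (μ i)]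
    (ρ : ∀ i, X i → X i → ℝ)
    (hnonneg : ∀ i x y, 0 ≤ ρ i x y) (hsymm : ∀ i x y, ρ i x y = ρ i y x)
    (htri : ∀ i x y z, ρ i x z ≤ ρ i x y + ρ i y z)
    (hadm : ∀ i, Admissible (μ i) (ρ i))
    (ε φ : ℝ) (hε0 : 0 < ε) (hε1 : ε < 1 / 10) (hφ : 1 < φ)
    (s : Fin k → ℝ)
    (hlb : ∀ i, s i / φ < epsEntropy (μ i) (ρ i) (4 * ε))
    (hub : ∀ i, epsEntropy (μ i) (ρ i) (4 * ε) < s i)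
    (P : (∀ i, X i) → (∀ i, X i) → ℝ)
    (hP : P = fun x y => (∑ i, s i)⁻¹ * ∑ i, s i * ρ i (x i) (y i)) :
    ε ^ 3 / φ * ∑ i, epsEntropy (μ i) (ρ i) (4 * ε) - k - 1
      ≤ epsEntropy (Measure.pi μ) P (ε ^ 4) := by
  have hφ0 : 0 < φ := one_pos.trans hφ
  have hs : ∀ i, 0 < s i := fun i => (epsEntropy_nonneg _ _ _).trans_lt (hub i)
  set H := ∑ i, epsEntropy (μ i) (ρ i) (4 * ε)
  set S := ∑ i, s i
  have hHS : H ≤ S := Finset.sum_le_sum fun i _ => (hub i).le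
  have hε3 : 0 < ε ^ 3 := by positivity
  rcases le_or_gt (ε ^ 3 / φ * H - k - 1) 0 with htriv | hbig
  · exact htriv.trans (epsEntropy_nonneg _ _ _)
  have hST : ε ^ 3 / φ * H ≤ ε ^ 3 * (S / φ) := by
    rw [div_mul_eq_mul_div, mul_div_assoc']
    gcongr
  have hT : 1 ≤ ε ^ 3 * (S / φ) := by
    have : (0 : ℝ) ≤ k := k.cast_nonneg
    linarith
  have hS : 0 < S := by
    by_contra! h
    have := mul_nonpos_of_nonneg_of_nonpos hε3.le (div_nonpos_of_nonpos_of_nonneg h hφ0.le)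
    linarith
  have hadmP : Admissible (Measure.pi μ) P := hP ▸ Admissible.pi hadm hs
  choose n hn hnot using fun i => exists_epsEntropy_eq_logb
    ((div_pos (hs i) hφ0).trans (hlb i))
  have hsn : ∀ i, (2 : ℝ) ^ (s i / φ) ≤ 1 + n i := fun i => by
    rw [← Real.le_logb_iff_rpow_le one_lt_two (by positivity), ← hn i]
    exact (hlb i).le
  choose Y hYm hYge hYball using fun i => exists_measurableSet_small_balls (μ i) (ρ i)
    (hsymm i) (htri i) hε0 (hadm i) (hnot i)
  set G := {x : ∀ i, X i | ε * S ≤ ∑ i, (Y i).indicator (fun _ => s i) (x i)}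
  have hGge : 3 * ε - ε ≤ (Measure.pi μ).real G :=
    sub_le_measureReal_weight μ (fun i => (hs i).le) hS hYm hε0.le hYge
  set K : ℝ := 2 ^ ((ε - ε ^ 3) * (S / φ)) with hK
  have hpiece : ∀ A : Set (∀ i, X i), (∀ x ∈ A, ∀ y ∈ A, P x y < ε ^ 4) →
      K * (Measure.pi μ).real (A ∩ G) ≤ 2 ^ k := by
    intro A hA
    rcases A.eq_empty_or_nonempty with rfl | ⟨a, ha⟩
    · simp
    choose D hDm hYD hDle using fun i => hYball i (a i)
    have hbound := mul_measureReal_prod_le_two_pow μ (fun i => (n i).cast_nonneg) hDm hDle K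
    rw [Fintype.card_fin] at hbound
    refine le_trans ?_ hbound
    refine mul_le_mul_of_nonneg_left (measureReal_mono ?_) (by positivity)
    rintro x ⟨hxA, hxG⟩
    have hdist : ∑ i, s i * ρ i (x i) (a i) < S * ε ^ 4 := by
      have := hA x hxA a ha
      rwa [hP, inv_mul_lt_iff₀ hS] at this
    have hterm : ∀ i, (Y i).indicator (fun _ => s i) (x i) ≤
        (D i).indicator (fun _ => s i) (x i) + ε⁻¹ * (s i * ρ i (x i) (a i)) := by
      intro i
      have hDnn : 0 ≤ (D i).indicator (fun _ => s i) (x i) :=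
        Set.indicator_nonneg (fun _ _ => (hs i).le) _
      have hρnn : 0 ≤ ε⁻¹ * (s i * ρ i (x i) (a i)) :=
        mul_nonneg (by positivity) (mul_nonneg (hs i).le (hnonneg i _ _))
      by_cases hxY : x i ∈ Y i
      · rw [Set.indicator_of_mem hxY]
        rcases lt_or_ge (ρ i (x i) (a i)) ε with hlt | hge
        · rw [Set.indicator_of_mem (hYD i _ hxY hlt)]
          linarith
        · have : s i ≤ ε⁻¹ * (s i * ρ i (x i) (a i)) := by
            rw [le_inv_mul_iff₀ hε0, mul_comm ε]
            exact mul_le_mul_of_nonneg_left hge (hs i).le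
          linarith
      · rw [Set.indicator_of_notMem hxY]
        linarith
    have hweight : (ε - ε ^ 3) * S ≤ ∑ i, (D i).indicator (fun _ => s i) (x i) := by
      have hsum := Finset.sum_le_sum fun i (_ : i ∈ Finset.univ) => hterm i
      rw [Finset.sum_add_distrib, ← Finset.mul_sum] at hsum
      have : ε⁻¹ * ∑ i, s i * ρ i (x i) (a i) ≤ ε ^ 3 * S := by
        rw [inv_mul_le_iff₀ hε0]
        linarith
      have : ε * S ≤ ∑ i, (Y i).indicator (fun _ => s i) (x i) := hxG
      linarith
    calc K ≤ 2 ^ (∑ i, (D i).indicator (fun _ => s i) (x i) / φ) := by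
          refine Real.rpow_le_rpow_of_exponent_le one_le_two ?_
          rw [← Finset.sum_div, mul_div_assoc']
          gcongr
      _ = ∏ i, (2 : ℝ) ^ ((D i).indicator (fun _ => s i) (x i) / φ) :=
          Real.rpow_sum_of_pos two_pos _ _
      _ ≤ ∏ i, (1 + (D i).indicator (fun _ => (n i : ℝ)) (x i)) := by
          refine Finset.prod_le_prod (fun i _ => by positivity) fun i _ => ?_
          by_cases hx : x i ∈ D i
          · simpa [hx] using hsn i
          · simp [hx]
  refine le_epsEntropy (by positivity) hadmP fun N ⟨A, _, hAcover, hA0, hAdiam⟩ => ?_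
  have hA0' : (Measure.pi μ).real (A 0) ≤ ε ^ 4 := by
    have := ENNReal.toReal_mono ENNReal.ofReal_ne_top hA0.le
    rwa [ENNReal.toReal_ofReal (by positivity)] at this
  have hGle : (Measure.pi μ).real G ≤
      ε ^ 4 + ∑ j : Fin N, (Measure.pi μ).real (A j.succ ∩ G) := by
    have hsub : G ⊆ A 0 ∪ ⋃ j : Fin N, A j.succ ∩ G := by
      intro x hx
      obtain ⟨j, hj⟩ := Set.mem_iUnion.1 (hAcover ▸ Set.mem_univ x)
      cases j using Fin.cases with
      | zero => exact Or.inl hj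
      | succ j => exact Or.inr (Set.mem_iUnion.2 ⟨j, hj, hx⟩)
    refine (measureReal_mono hsub).trans ((measureReal_union_le _ _).trans ?_)
    exact add_le_add hA0' (measureReal_iUnion_fintype_le _)
  have hKsum : K * ∑ j : Fin N, (Measure.pi μ).real (A j.succ ∩ G) ≤ N * 2 ^ k := by
    rw [Finset.mul_sum]
    refine (Finset.sum_le_sum fun j _ => hpiece _ (hAdiam j.succ (Fin.succ_ne_zero j))).trans ?_
    simp
  have hK0 : 0 < K := by positivity
  have hKε : K * ε ≤ N * 2 ^ k := by
    have hε4 : ε ^ 4 ≤ ε := by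
      simpa using pow_le_pow_of_le_one hε0.le (by linarith) (show 1 ≤ 4 by norm_num)
    refine le_trans (mul_le_mul_of_nonneg_left ?_ hK0.le) hKsum
    linarith
  have hKsplit : K = 2 ^ (ε ^ 3 * (S / φ)) * 2 ^ ((ε - 2 * ε ^ 3) * (S / φ)) := by
    rw [hK, ← Real.rpow_add two_pos]
    ring_nf
  rw [Real.rpow_sub two_pos, Real.rpow_sub two_pos, Real.rpow_one, Real.rpow_natCast,
    div_div, div_le_iff₀ (by positivity)]
  have hmono : (2 : ℝ) ^ (ε ^ 3 / φ * H) ≤ 2 ^ (ε ^ 3 * (S / φ)) :=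
    Real.rpow_le_rpow_of_exponent_le one_le_two hST
  have hpos : (0 : ℝ) < 2 ^ (ε ^ 3 * (S / φ)) := by positivity
  have hfactor := mul_le_mul_of_nonneg_left (one_le_two_rpow_mul hε0 hε1 hT) hpos.le
  rw [← mul_assoc, ← hKsplit] at hfactor
  linarith
end
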